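/- Let α > 1/4. Then there exists a constant C_α > 0 such that for every N ∈ P := {0,1,2,4,…,2^k,…}, every u₀ ∈ L²(𝕋²), and every time interval I ⊂ ℝ with |I| ≤ (1 ∨ N)^{−1}, one has ‖W(·)P̃_N u₀‖_{L²(I; L^∞(𝕋²))} ≤ C_α (1 ∨ N)^α ‖P̃_N u₀‖_{L²(𝕋²)} (here 1 ∨ N denotes max{1,N}). -/

import Mathlib

/-! The dyadic block of `P̃_N` lies in the box `|m|, |n| < L` with `L = max 1 N`, and only this
localisation matters. The estimate is a `TT*` argument with discretised time. The integral over an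
interval of length at most `1/L` is an integral over `s ∈ [0, L⁻²]` of sums over the `L` times
`t₁ + s + j L⁻²` (`setIntegral_le_of_sum_le`), so it suffices to bound
`∑ j, |u(t_j, p_j)|²` for arbitrary points `p_j`. Since `u(t_j, p_j)` is the inner product of the
coefficients with a plane wave, this sum is at most `‖a‖²` times the Hilbert–Schmidt norm of the
Gram matrix of the plane waves (`sum_norm_inner_sq_le`).

The Gram entries are exponential sums over the box. For fixed `m ≠ 0` the sum over `n` has a
quadratic phase with coefficient `±d L⁻²`, `d = |j - k|`, and Weyl differencing bounds its square
by `L² log L / d` up to constants (`norm_sq_quadratic_sum_le`); the sum over `m` costs `L²`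
(`norm_sq_kernel_le`). Summing over `j, k` gives a Hilbert–Schmidt norm of order `L^{5/2} log L`,
and multiplication by the step `L⁻²` leaves `L^{1/2} log L ≲ L^{2α}`, which is where `α > 1/4`
enters. -/

open Complex MeasureTheory Filter Topology Set
open scoped Real BigOperators ENNReal

noncomputable section

/-- A (distributional) function on the torus `𝕋² = ℝ²/(2πℤ)²` is represented by its
sequence of Fourier coefficients, indexed by `ℤ × ℤ`. -/
abbrev CoefSeq : Type := ℤ × ℤ → ℂ

/-- Squared `L²(𝕋²)` norm, via Parseval's identity. -/
def l2NormSq (a : CoefSeq) : ℝ := ∑' mn : ℤ × ℤ, ‖a mn‖ ^ 2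

/-- The `L²(𝕋²)` norm. -/
def l2Norm (a : CoefSeq) : ℝ := Real.sqrt (l2NormSq a)

/-- The Sobolev weight `(1 + m² + n²)^s`. -/
def sobWeight (s : ℝ) (mn : ℤ × ℤ) : ℝ :=
  (1 + (mn.1 : ℝ) ^ 2 + (mn.2 : ℝ) ^ 2) ^ s

/-- Squared `H^s(𝕋²)` norm: `Σ (1+m²+n²)^s |ĝ(m,n)|²`. -/
def hsNormSq (s : ℝ) (a : CoefSeq) : ℝ := ∑' mn : ℤ × ℤ, sobWeight s mn * ‖a mn‖ ^ 2

/-- The `H^s(𝕋²)` norm. -/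
def hsNorm (s : ℝ) (a : CoefSeq) : ℝ := Real.sqrt (hsNormSq s a)

/-- Membership in `H^s(𝕋²)`. -/
def InHs (s : ℝ) (a : CoefSeq) : Prop :=
  Summable (fun mn : ℤ × ℤ => sobWeight s mn * ‖a mn‖ ^ 2)

/-- Membership in `H^∞(𝕋²) = ∩_{s ≥ 0} H^s(𝕋²)`. -/
def InHinf (a : CoefSeq) : Prop := ∀ s : ℝ, 0 ≤ s → InHs s a

/-- The (2π-periodic) function on `ℝ²` represented by the coefficients `a`. -/
def toFun (a : CoefSeq) (x y : ℝ) : ℂ :=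
  ∑' mn : ℤ × ℤ, a mn * Complex.exp (Complex.I * ((mn.1 : ℂ) * x + (mn.2 : ℂ) * y))

/-- The `L^∞(𝕋²)` norm of the function represented by `a`. -/
def supNorm (a : CoefSeq) : ℝ := ⨆ p : ℝ × ℝ, ‖toFun a p.1 p.2‖

/-- Fourier multiplier of `∂ₓ`: `(∂ₓf)^(m,n) = i·m·f̂(m,n)`. -/
def dxOp (a : CoefSeq) : CoefSeq := fun mn => Complex.I * (mn.1 : ℂ) * a mn

/-- Fourier multiplier of `∂_y`: `(∂_yf)^(m,n) = i·n·f̂(m,n)`. -/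
def dyOp (a : CoefSeq) : CoefSeq := fun mn => Complex.I * (mn.2 : ℂ) * a mn

/-- The `L^∞(𝕋²)` norm of the spatial gradient `∇f = (∂ₓf, ∂_yf)`. -/
def gradSupNorm (a : CoefSeq) : ℝ :=
  ⨆ p : ℝ × ℝ, Real.sqrt (‖toFun (dxOp a) p.1 p.2‖ ^ 2 + ‖toFun (dyOp a) p.1 p.2‖ ^ 2)

/-- Fourier multiplier of `𝓗Δ`, where `(𝓗f)^(m,n) = -i·sgn(m)·f̂(m,n)` (zero for `m = 0`)
and `(Δf)^(m,n) = -(m²+n²)·f̂(m,n)`; hence `(𝓗Δf)^(m,n) = i·sgn(m)·(m²+n²)·f̂(m,n)`. -/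
def hilbertLap (a : CoefSeq) : CoefSeq := fun mn =>
  Complex.I * (mn.1.sign : ℂ) * (((mn.1 : ℝ) ^ 2 + (mn.2 : ℝ) ^ 2 : ℝ) : ℂ) * a mn

/-- Fourier coefficients of a product of two functions on the torus (convolution). -/
def convOp (a b : CoefSeq) : CoefSeq := fun mn => ∑' pq : ℤ × ℤ, a pq * b (mn - pq)

/-- The function represented by `a` is real-valued. -/
def RealCoef (a : CoefSeq) : Prop := ∀ mn : ℤ × ℤ, a (-mn) = starRingEnd ℂ (a mn)

/-- `∫₀^{2π} f(x,y) dx = 0` for a.e. `y ∈ 𝕋`. -/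
def ZeroXMean (a : CoefSeq) : Prop := ∀ n : ℤ, a (0, n) = 0

/-- `u` solves `u_t + 𝓗Δu + u·uₓ = 0` on the time set `D`, coefficientwise
(i.e. in the sense of distributions on the torus). -/
def IsSolutionOn (D : Set ℝ) (u : ℝ → CoefSeq) : Prop :=
  ∀ t ∈ D, ∀ mn : ℤ × ℤ,
    HasDerivWithinAt (fun τ => u τ mn)
      (-(hilbertLap (u t) mn) - convOp (u t) (dxOp (u t)) mn) D t

/-- Continuity of `u : D → H^s(𝕋²)`. -/
def ContHsOn (s : ℝ) (D : Set ℝ) (u : ℝ → CoefSeq) : Prop :=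
  ∀ t₀ ∈ D, Tendsto (fun t => hsNorm s (fun mn => u t mn - u t₀ mn))
    (nhdsWithin t₀ D) (nhds 0)

/-- The unitary group `W(t)` associated with the linear part of the 2D Benjamin–Ono
equation: `(W(t)u₀)^(m,n) = e^{-it·sgn(m)(m²+n²)} û₀(m,n)`. -/
def Wgrp (t : ℝ) (a : CoefSeq) : CoefSeq := fun mn =>
  Complex.exp (-Complex.I * (t : ℂ) * (mn.1.sign : ℂ) *
    (((mn.1 : ℝ) ^ 2 + (mn.2 : ℝ) ^ 2 : ℝ) : ℂ)) * a mn

/-- The frequency region of `Q_x^k` (in the first variable): `m = 0` for `k = 0`, and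
`2^{k-1} ≤ |m| < 2^k` for `k ≥ 1`. -/
def QSet (k : ℕ) : Set ℤ :=
  if k = 0 then {0} else {m : ℤ | 2 ^ (k - 1) ≤ |m| ∧ |m| < 2 ^ k}

/-- The frequency block of the projector `P̃_N`, for `N ∈ P = {0} ∪ {2^k : k ∈ ℕ}`:
`P̃_0 = Q_x^0 Q_y^0` and `P̃_{2^k} = Q̃_x^k Q_y^k + Q̃_y^{k-1} Q_x^k`
(where `Q̃_x^k = Σ_{k'≤k} Q_x^{k'}` restricts to `|m| < 2^k`, and `Q̃_y^{-1} := 0`). -/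
def blockSet (N : ℕ) : Set (ℤ × ℤ) :=
  if N = 0 then {mn : ℤ × ℤ | mn.1 = 0 ∧ mn.2 = 0}
  else {mn : ℤ × ℤ | ∃ k : ℕ, N = 2 ^ k ∧
        ((|mn.1| < 2 ^ k ∧ mn.2 ∈ QSet k) ∨
         (1 ≤ k ∧ |mn.2| < 2 ^ (k - 1) ∧ mn.1 ∈ QSet k))}

/-- The Littlewood–Paley type projector `P̃_N`. -/
def Ptilde (N : ℕ) (a : CoefSeq) : CoefSeq := (blockSet N).indicator a

/-- `N ∈ P = {0, 1, 2, 4, …, 2^k, …}`. -/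
def inP (N : ℕ) : Prop := N = 0 ∨ ∃ k : ℕ, N = 2 ^ k

/-! ### Quadratic exponential sums -/

/-- Weyl differencing: the square of a sum is controlled by the autocorrelations of the
summands. The factor `2` accounts for the two signs of the shift `h`. -/
lemma norm_sq_sum_le_correlations (z : ℕ → ℂ) (R : ℕ) :
    ‖∑ r ∈ Finset.range R, z r‖ ^ 2 ≤
      2 * ∑ h ∈ Finset.range R,
        ‖∑ r ∈ Finset.range (R - h), z (r + h) * (starRingEnd ℂ) (z r)‖ := by
  have h1 : ‖∑ r ∈ Finset.range R, z r‖ ^ 2 ≤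
      2 * (∑ m ∈ Finset.range R, ∑ s ∈ Finset.range (m + 1),
        z m * (starRingEnd ℂ) (z s)).re := by
    induction R with
    | zero => simp
    | succ R ih =>
      rw [Finset.sum_range_succ, Finset.sum_range_succ (fun m => ∑ s ∈ Finset.range (m + 1), _),
        ← Finset.mul_sum, ← map_sum, Finset.sum_range_succ z, Complex.add_re]
      set S := ∑ r ∈ Finset.range R, z r
      have e1 : ‖S + z R‖ ^ 2 = ‖S‖ ^ 2 + 2 * (z R * (starRingEnd ℂ) S).re + ‖z R‖ ^ 2 := by
        simp only [← Complex.normSq_eq_norm_sq, Complex.normSq_apply, Complex.mul_re,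
          Complex.conj_re, Complex.conj_im, Complex.add_re, Complex.add_im]
        ring
      have e2 : (z R * (starRingEnd ℂ) (S + z R)).re =
          (z R * (starRingEnd ℂ) S).re + ‖z R‖ ^ 2 := by
        simp only [← Complex.normSq_eq_norm_sq, Complex.normSq_apply, Complex.mul_re,
          Complex.conj_re, Complex.conj_im, Complex.add_re, Complex.add_im]
        ring
      rw [e1, e2]
      nlinarith [sq_nonneg ‖z R‖]
  have h2 : ∑ m ∈ Finset.range R, ∑ s ∈ Finset.range (m + 1), z m * (starRingEnd ℂ) (z s) =
      ∑ h ∈ Finset.range R, ∑ r ∈ Finset.range (R - h), z (r + h) * (starRingEnd ℂ) (z r) := by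
    rw [← Finset.sum_range_diag_flip R (fun h r => z (r + h) * (starRingEnd ℂ) (z r))]
    refine Finset.sum_congr rfl fun m _ => ?_
    rw [← Finset.sum_range_reflect]
    refine Finset.sum_congr rfl fun k hk => ?_
    have : k ≤ m := Nat.lt_succ_iff.mp (Finset.mem_range.mp hk)
    rw [Nat.sub_add_cancel this]
    simp
  refine h1.trans ?_
  rw [h2]
  gcongr
  exact (Complex.re_le_norm _).trans (norm_sum_le _ _)

/-- A lower bound for `|sin|` on `[-2, 2]`, a range that exceeds `[-π/2, π/2]`. -/
lemma abs_le_abs_sin {x : ℝ} (hx : |x| ≤ 2) : |x| / 4 ≤ |Real.sin x| := by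
  wlog h0 : 0 ≤ x generalizing x with H
  · have := H (x := -x) (by simpa using hx) (by linarith)
    simpa using this
  rw [abs_of_nonneg h0] at hx ⊢
  refine le_trans ?_ (le_abs_self _)
  have hpi := Real.pi_gt_three
  have hpi4 := Real.pi_lt_four
  rcases le_total x (π / 2) with h | h
  · refine le_trans ?_ (Real.mul_le_sin h0 h)
    have : 1 / 4 ≤ 2 / π := by rw [div_le_div_iff₀] <;> linarith
    nlinarith
  · rw [← Real.sin_pi_sub]
    refine le_trans ?_ (Real.mul_le_sin (x := π - x) (by linarith) (by linarith))
    have : 2 / π * (π - x) = 2 - 2 * x / π := by field_simp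
    rw [this]
    have : 2 * x / π ≤ 2 * x / 3 := by gcongr
    linarith

lemma norm_geom_sum_exp_le (θ : ℝ) (hθ : |θ| ≤ 2) (hθ0 : θ ≠ 0) (n : ℕ) :
    ‖∑ r ∈ Finset.range n, Complex.exp (Complex.I * ((2 * θ : ℝ) : ℂ)) ^ r‖ ≤ 4 / |θ| := by
  set w := Complex.exp (Complex.I * ((2 * θ : ℝ) : ℂ)) with hw
  have hpos : 0 < |θ| := abs_pos.mpr hθ0
  have hw1 : ‖w - 1‖ = 2 * |Real.sin θ| := by
    rw [hw, Complex.norm_exp_I_mul_ofReal_sub_one]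
    simp
  have hs := abs_le_abs_sin hθ
  have hne : w ≠ 1 := by
    intro h
    rw [h] at hw1
    simp at hw1
    simp [hw1] at hs
    linarith
  have hwn : ‖w‖ = 1 := by rw [hw, mul_comm, Complex.norm_exp_ofReal_mul_I]
  rw [geom_sum_eq hne, norm_div, hw1, div_le_div_iff₀ (by linarith) hpos]
  have : ‖w ^ n - 1‖ ≤ 2 := by
    refine (norm_sub_le _ _).trans ?_
    simp [hwn]; norm_num
  nlinarith [norm_nonneg (w ^ n - 1)]

/-- Weyl's estimate for quadratic exponential sums with a small quadratic coefficient `τ`: after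
differencing by `h` the correlation is a geometric sum of ratio `e^{2iτh}`, hence of size at most
`4 / (|τ| h)`, because `|τ| h` stays below `2`. -/
lemma norm_sq_quadratic_sum_range_le (α₀ β τ : ℝ) (L R : ℕ) (hL : 1 ≤ L) (hR : R ≤ 2 * L)
    (hτ : τ ≠ 0) (hτL : |τ| * L ≤ 1) :
    ‖∑ r ∈ Finset.range R,
        Complex.exp (Complex.I * ((α₀ + β * r + τ * (r : ℝ) ^ 2 : ℝ) : ℂ))‖ ^ 2 ≤
      4 * L + 8 / |τ| * (1 + Real.log (2 * L)) := by
  have hτpos : 0 < |τ| := abs_pos.mpr hτ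
  refine (norm_sq_sum_le_correlations _ R).trans ?_
  have hL' : (1 : ℝ) ≤ L := by exact_mod_cast hL
  have hlog : 0 ≤ Real.log (2 * L) := Real.log_nonneg (by linarith)
  rcases R with _ | R
  · simp; positivity
  rw [Finset.sum_range_succ']
  have h0 : ‖∑ r ∈ Finset.range (R + 1 - 0),
      Complex.exp (Complex.I * ((α₀ + β * ((r + 0 : ℕ) : ℝ) + τ * ((r + 0 : ℕ) : ℝ) ^ 2 : ℝ) : ℂ)) *
      (starRingEnd ℂ) (Complex.exp (Complex.I * ((α₀ + β * r + τ * (r : ℝ) ^ 2 : ℝ) : ℂ)))‖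
      ≤ 2 * L := by
    refine (norm_sum_le _ _).trans ?_
    have : ∀ x : ℝ, ‖Complex.exp (Complex.I * (x : ℂ))‖ = 1 := fun x => by
      rw [mul_comm, Complex.norm_exp_ofReal_mul_I]
    simp only [norm_mul, RCLike.norm_conj, this]
    simp
    exact_mod_cast hR
  have hh : ∀ h ∈ Finset.range R, ‖∑ r ∈ Finset.range (R + 1 - (h + 1)),
      Complex.exp (Complex.I * ((α₀ + β * ((r + (h + 1) : ℕ) : ℝ)
        + τ * ((r + (h + 1) : ℕ) : ℝ) ^ 2 : ℝ) : ℂ)) *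
      (starRingEnd ℂ) (Complex.exp (Complex.I * ((α₀ + β * r + τ * (r : ℝ) ^ 2 : ℝ) : ℂ)))‖
      ≤ 4 / |τ| * ((h + 1 : ℕ) : ℝ)⁻¹ := by
    intro h hh
    have hhR : h < R := Finset.mem_range.mp hh
    have key : ∀ r : ℕ, Complex.exp (Complex.I * ((α₀ + β * ((r + (h + 1) : ℕ) : ℝ)
        + τ * ((r + (h + 1) : ℕ) : ℝ) ^ 2 : ℝ) : ℂ)) *
      (starRingEnd ℂ) (Complex.exp (Complex.I * ((α₀ + β * r + τ * (r : ℝ) ^ 2 : ℝ) : ℂ)))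
      = Complex.exp (((β * (h + 1) + τ * (h + 1) ^ 2 : ℝ) : ℂ) * Complex.I) *
        Complex.exp (Complex.I * ((2 * (τ * ((h + 1 : ℕ) : ℝ)) : ℝ) : ℂ)) ^ r := by
      intro r
      rw [← Complex.exp_conj, ← Complex.exp_nat_mul, ← Complex.exp_add, ← Complex.exp_add]
      congr 1
      simp only [map_mul, Complex.conj_I, Complex.conj_ofReal]
      push_cast
      ring
    simp only [key]
    rw [← Finset.mul_sum, norm_mul, Complex.norm_exp_ofReal_mul_I, one_mul]
    have hpos : (0 : ℝ) < ((h + 1 : ℕ) : ℝ) := by positivity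
    refine (norm_geom_sum_exp_le _ ?_ (mul_ne_zero hτ hpos.ne') _).trans ?_
    · rw [abs_mul, abs_of_pos hpos]
      have : ((h + 1 : ℕ) : ℝ) ≤ 2 * L := by exact_mod_cast (by omega : h + 1 ≤ 2 * L)
      nlinarith
    · rw [abs_mul, abs_of_pos hpos]
      apply le_of_eq; field_simp
  have hharm : ∑ h ∈ Finset.range R, ((h + 1 : ℕ) : ℝ)⁻¹ ≤ 1 + Real.log (2 * L) := by
    have h1 := harmonic_le_one_add_log R
    have h2 : ((harmonic R : ℚ) : ℝ) = ∑ h ∈ Finset.range R, ((h + 1 : ℕ) : ℝ)⁻¹ := by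
      simp [harmonic]
    rw [← h2]
    refine h1.trans ?_
    rcases Nat.eq_zero_or_pos R with rfl | hRp
    · simpa using hlog
    · gcongr
      exact_mod_cast (by omega : R ≤ 2 * L)
  have hsum := (Finset.sum_le_sum hh)
  rw [← Finset.mul_sum] at hsum
  have h3 : 4 / |τ| * ∑ h ∈ Finset.range R, ((h + 1 : ℕ) : ℝ)⁻¹ ≤
      4 / |τ| * (1 + Real.log (2 * L)) := by gcongr
  have h4 : 8 / |τ| * (1 + Real.log (2 * L)) = 2 * (4 / |τ| * (1 + Real.log (2 * L))) := by ring
  linarith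

/-- Weyl's estimate over the symmetric interval `|n| < L`, by translating the index. -/
lemma norm_sq_quadratic_sum_le (α₀ β τ : ℝ) (L : ℕ) (hL : 1 ≤ L)
    (hτ : τ ≠ 0) (hτL : |τ| * L ≤ 1) :
    ‖∑ n ∈ Finset.Ioo (-(L : ℤ)) L,
        Complex.exp (Complex.I * ((α₀ + β * n + τ * (n : ℝ) ^ 2 : ℝ) : ℂ))‖ ^ 2 ≤
      4 * L + 8 / |τ| * (1 + Real.log (2 * L)) := by
  have := norm_sq_quadratic_sum_range_le (α₀ - β * (L - 1) + τ * (L - 1) ^ 2)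
    (β - 2 * τ * (L - 1)) τ L (2 * L - 1) hL (by omega) hτ hτL
  convert this using 3
  refine Finset.sum_nbij' (fun n => (n + (L - 1)).toNat) (fun r => (r : ℤ) - (L - 1)) ?_ ?_ ?_ ?_ ?_
  · intro n hn; simp only [Finset.mem_Ioo, Finset.mem_range] at *; omega
  · intro n hn; simp only [Finset.mem_Ioo, Finset.mem_range] at *; omega
  · intro n hn; simp only [Finset.mem_Ioo] at *; omega
  · intro n hn; simp
  · intro n hn
    simp only [Finset.mem_Ioo] at hn
    have : (((n + (L - 1)).toNat : ℕ) : ℝ) = n + (L - 1) := by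
      have : (((n + (L - 1)).toNat : ℕ) : ℤ) = n + (L - 1) := Int.toNat_of_nonneg (by omega)
      exact_mod_cast this
    rw [this]
    congr 3
    ring

/-! ### Discrete duality -/

/-- Cauchy–Schwarz: a quadratic form is bounded by the Hilbert–Schmidt norm of its matrix. -/
lemma sum_product_mul_le (s : Finset ℕ) (f : ℕ → ℝ) (g : ℕ → ℕ → ℝ) :
    ∑ p ∈ s ×ˢ s, f p.1 * f p.2 * g p.1 p.2 ≤
      (∑ j ∈ s, f j ^ 2) * Real.sqrt (∑ j ∈ s, ∑ k ∈ s, g j k ^ 2) := by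
  have h := Real.sum_mul_le_sqrt_mul_sqrt (s ×ˢ s) (fun p => f p.1 * f p.2) (fun p => g p.1 p.2)
  have e : ∑ p ∈ s ×ˢ s, (f p.1 * f p.2) ^ 2 = (∑ j ∈ s, f j ^ 2) ^ 2 := by
    rw [Finset.sum_product, sq, Finset.sum_mul_sum]
    simp only [mul_pow]
  rw [e, Real.sqrt_sq (Finset.sum_nonneg fun _ _ => sq_nonneg _),
    Finset.sum_product s s (fun p => g p.1 p.2 ^ 2)] at h
  exact h

/-- The `TT*` duality in finite form: the analysis operator `v ↦ (⟪e j, v⟫)_j` has squared norm at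
most the Hilbert–Schmidt norm of the Gram matrix of the vectors `e j`. -/
lemma sum_norm_inner_sq_le {E : Type*} [NormedAddCommGroup E] [InnerProductSpace ℂ E]
    (s : Finset ℕ) (e : ℕ → E) (v : E) :
    ∑ j ∈ s, ‖inner ℂ (e j) v‖ ^ 2 ≤
      ‖v‖ ^ 2 * Real.sqrt (∑ j ∈ s, ∑ k ∈ s, ‖inner ℂ (e j) (e k)‖ ^ 2) := by
  set F : ℕ → ℂ := fun j => inner ℂ (e j) v with hF
  set A := ∑ j ∈ s, ‖F j‖ ^ 2 with hA
  set Γ := Real.sqrt (∑ j ∈ s, ∑ k ∈ s, ‖inner ℂ (e j) (e k)‖ ^ 2) with hΓ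
  set w : E := ∑ j ∈ s, F j • e j with hw
  have hA0 : 0 ≤ A := Finset.sum_nonneg fun _ _ => by positivity
  have hΓ0 : 0 ≤ Γ := Real.sqrt_nonneg _
  have h1 : inner ℂ w v = (A : ℂ) := by
    rw [hw, sum_inner, hA, Complex.ofReal_sum]
    refine Finset.sum_congr rfl fun j _ => ?_
    rw [inner_smul_left, Complex.conj_mul']
    simp
  have h2 : A ≤ ‖w‖ * ‖v‖ := by
    have := norm_inner_le_norm (𝕜 := ℂ) w v
    rwa [h1, Complex.norm_real, Real.norm_of_nonneg hA0] at this
  have h3 : ‖w‖ ^ 2 ≤ A * Γ := by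
    have e1 : ‖w‖ ^ 2 = ‖inner ℂ w w‖ := by
      rw [inner_self_eq_norm_sq_to_K]; simp
    have e2 : inner ℂ w w = ∑ j ∈ s, ∑ k ∈ s,
        (starRingEnd ℂ) (F j) * (F k * inner ℂ (e j) (e k)) := by
      conv_lhs => rw [hw, sum_inner]
      refine Finset.sum_congr rfl fun j _ => ?_
      rw [inner_sum]
      refine Finset.sum_congr rfl fun k _ => ?_
      rw [inner_smul_left, inner_smul_right]
    rw [e1, e2, ← Finset.sum_product']
    refine (norm_sum_le _ _).trans ?_
    have e3 : ∀ p : ℕ × ℕ, ‖(starRingEnd ℂ) (F p.1) * (F p.2 * inner ℂ (e p.1) (e p.2))‖ =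
        (‖F p.1‖ * ‖F p.2‖) * ‖inner ℂ (e p.1) (e p.2)‖ := fun p => by
      simp [mul_assoc]
    simp only [e3]
    exact sum_product_mul_le s (fun j => ‖F j‖) (fun j k => ‖inner ℂ (e j) (e k)‖)
  clear_value A Γ w
  rcases hA0.eq_or_lt with h | h
  · rw [← h]; exact mul_nonneg (sq_nonneg _) hΓ0
  · have h4 : A * A ≤ (‖v‖ ^ 2 * Γ) * A := by
      have := mul_self_le_mul_self hA0 h2
      nlinarith [sq_nonneg ‖v‖]
    exact le_of_mul_le_mul_right h4 h

/-- Each distance `d = |j - k|` is attained by at most two indices `k`; in natural-number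
arithmetic `|j - k| = (j - k) + (k - j)`. -/
lemma sum_range_symm_le (f : ℕ → ℝ) (hf : ∀ n, 0 ≤ f n) (L j : ℕ) (hj : j < L) :
    ∑ k ∈ Finset.range L, f ((j - k) + (k - j)) ≤ 2 * ∑ d ∈ Finset.range L, f d := by
  rw [← Finset.sum_range_add_sum_Ico _ (show j + 1 ≤ L from hj), two_mul]
  gcongr ?_ + ?_
  · rw [← Finset.sum_range_reflect]
    calc _ = ∑ d ∈ Finset.range (j + 1), f d := by
          refine Finset.sum_congr rfl fun k hk => ?_
          have := Finset.mem_range.mp hk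
          congr 1; omega
      _ ≤ _ := Finset.sum_le_sum_of_subset_of_nonneg
          (Finset.range_subset_range.mpr hj) fun _ _ _ => hf _
  · calc _ = ∑ d ∈ Finset.Ico 1 (L - j), f d := by
          rw [Finset.sum_Ico_eq_sum_range, Finset.sum_Ico_eq_sum_range, Nat.sub_sub]
          refine Finset.sum_congr rfl fun k hk => ?_
          congr 1; omega
      _ ≤ _ := Finset.sum_le_sum_of_subset_of_nonneg
          (fun x hx => by simp only [Finset.mem_Ico, Finset.mem_range] at *; omega)
          fun _ _ _ => hf _

/-! ### The kernel on a frequency box -/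

/-- The square box of frequencies `|m| < L`, `|n| < L`. -/
def freqBox (L : ℕ) : Finset (ℤ × ℤ) :=
  Finset.Ioo (-(L : ℤ)) L ×ˢ Finset.Ioo (-(L : ℤ)) L

/-- The phase `mx + ny - t·sgn(m)(m² + n²)` of the linear flow. -/
def phase (t x y : ℝ) (mn : ℤ × ℤ) : ℝ :=
  mn.1 * x + mn.2 * y - t * (mn.1.sign * ((mn.1 : ℝ) ^ 2 + (mn.2 : ℝ) ^ 2))

lemma norm_exp_I_mul_real (x : ℝ) : ‖Complex.exp (Complex.I * (x : ℂ))‖ = 1 := by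
  rw [mul_comm, Complex.norm_exp_ofReal_mul_I]

lemma card_Ioo_le (L : ℕ) : ((Finset.Ioo (-(L : ℤ)) L).card : ℝ) ≤ 2 * L := by
  rw [Int.card_Ioo]
  exact_mod_cast (by omega : (((L : ℤ) - -(L : ℤ) - 1).toNat) ≤ 2 * L)

/-- For fixed `m`, the sum of the waves over `n`, at a time gap `d / L²` with `1 ≤ d < L`. The mode
`m = 0` does not disperse, since `sgn 0 = 0`, and only has the trivial bound. -/
lemma norm_sq_column_le (t x y : ℝ) (L d : ℕ) (hL : 1 ≤ L) (hd : 1 ≤ d) (hdL : d < L)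
    (ht : |t| = d / (L : ℝ) ^ 2) (m : ℤ) :
    ‖∑ n ∈ Finset.Ioo (-(L : ℤ)) L, Complex.exp (Complex.I * (phase t x y (m, n) : ℂ))‖ ^ 2 ≤
      12 * (L : ℝ) ^ 2 * (1 + Real.log (2 * L)) / d + if m = 0 then 4 * (L : ℝ) ^ 2 else 0 := by
  have hL' : (1 : ℝ) ≤ L := by exact_mod_cast hL
  have hd' : (1 : ℝ) ≤ d := by exact_mod_cast hd
  have hdL' : (d : ℝ) ≤ L := by exact_mod_cast hdL.le
  have hlog : 0 ≤ Real.log (2 * L) := Real.log_nonneg (by linarith)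
  split_ifs with hm
  · have h1 : ‖∑ n ∈ Finset.Ioo (-(L : ℤ)) L,
        Complex.exp (Complex.I * (phase t x y (m, n) : ℂ))‖ ≤ 2 * L := by
      refine (norm_sum_le _ _).trans ?_
      simp only [norm_exp_I_mul_real, Finset.sum_const, nsmul_eq_mul, mul_one]
      exact card_Ioo_le L
    have h2 : 0 ≤ 12 * (L : ℝ) ^ 2 * (1 + Real.log (2 * L)) / d := by positivity
    have h3 := pow_le_pow_left₀ (norm_nonneg _) h1 2
    nlinarith
  · have hs : |((m.sign : ℤ) : ℝ)| = 1 := by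
      rcases lt_or_gt_of_ne hm with h | h
      · simp [Int.sign_eq_neg_one_of_neg h]
      · simp [Int.sign_eq_one_of_pos h]
    have habs : |-(t * (m.sign : ℝ))| = d / (L : ℝ) ^ 2 := by
      rw [abs_neg, abs_mul, hs, mul_one, ht]
    have hτ : -(t * (m.sign : ℝ)) ≠ 0 := by
      rw [← abs_pos, habs]; positivity
    have := norm_sq_quadratic_sum_le (m * x - t * (m.sign * (m : ℝ) ^ 2)) y (-(t * m.sign)) L hL hτ
      (by
        rw [habs, div_mul_eq_mul_div, div_le_one (by positivity), sq]
        gcongr)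
    have e : ∀ n : ℤ, phase t x y (m, n) =
        m * x - t * (m.sign * (m : ℝ) ^ 2) + y * n + -(t * m.sign) * (n : ℝ) ^ 2 := by
      intro n; simp only [phase]; ring
    simp only [e]
    refine this.trans ?_
    rw [habs, add_zero]
    have e1 : 8 / (d / (L : ℝ) ^ 2) * (1 + Real.log (2 * L)) =
        8 * (L : ℝ) ^ 2 * (1 + Real.log (2 * L)) / d := by field_simp
    have e2 : 4 * (L : ℝ) ≤ 4 * (L : ℝ) ^ 2 * (1 + Real.log (2 * L)) / d := by
      rw [le_div_iff₀ (by linarith)]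
      nlinarith [mul_nonneg (sq_nonneg (L : ℝ)) hlog]
    have e3 : 12 * (L : ℝ) ^ 2 * (1 + Real.log (2 * L)) / d =
        4 * (L : ℝ) ^ 2 * (1 + Real.log (2 * L)) / d +
        8 * (L : ℝ) ^ 2 * (1 + Real.log (2 * L)) / d := by ring
    linarith

/-- The kernel of `TT*` at a time gap `d / L²`: dispersion is used in the `n` variable only, and
the sum over `m` is estimated by Cauchy–Schwarz. -/
lemma norm_sq_kernel_le (t x y : ℝ) (L d : ℕ) (hL : 1 ≤ L) (hdL : d < L)
    (ht : |t| = d / (L : ℝ) ^ 2) :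
    ‖∑ mn ∈ freqBox L, Complex.exp (Complex.I * (phase t x y mn : ℂ))‖ ^ 2 ≤
      112 * (L : ℝ) ^ 4 * (1 + Real.log (2 * L)) * ((d + 1 : ℕ) : ℝ)⁻¹ := by
  have hL' : (1 : ℝ) ≤ L := by exact_mod_cast hL
  have hlog : 0 ≤ Real.log (2 * L) := Real.log_nonneg (by linarith)
  have hcard := card_Ioo_le L
  rcases Nat.eq_zero_or_pos d with rfl | hd
  · have h1 : ‖∑ mn ∈ freqBox L, Complex.exp (Complex.I * (phase t x y mn : ℂ))‖
        ≤ 2 * L * (2 * L) := by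
      refine (norm_sum_le _ _).trans ?_
      simp only [norm_exp_I_mul_real, Finset.sum_const, nsmul_eq_mul, mul_one]
      rw [freqBox, Finset.card_product]
      push_cast
      gcongr
    have h3 := pow_le_pow_left₀ (norm_nonneg _) h1 2
    have h4 : 0 ≤ (L : ℝ) ^ 4 := by positivity
    simp only [zero_add, Nat.cast_one, inv_one, mul_one]
    nlinarith [mul_nonneg h4 hlog]
  · have hd' : (1 : ℝ) ≤ d := by exact_mod_cast hd
    have hdL' : (d : ℝ) ≤ L := by exact_mod_cast hdL.le
    rw [freqBox, Finset.sum_product]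
    set S : ℤ → ℂ := fun m => ∑ n ∈ Finset.Ioo (-(L : ℤ)) L,
      Complex.exp (Complex.I * (phase t x y (m, n) : ℂ)) with hS
    set ℓ := 1 + Real.log (2 * L) with hℓ
    have hℓ1 : 1 ≤ ℓ := by linarith
    have h1 : ‖∑ m ∈ Finset.Ioo (-(L : ℤ)) L, S m‖ ^ 2 ≤
        (∑ m ∈ Finset.Ioo (-(L : ℤ)) L, ‖S m‖) ^ 2 :=
      pow_le_pow_left₀ (norm_nonneg _) (norm_sum_le _ _) 2
    have h2 := sq_sum_le_card_mul_sum_sq (s := Finset.Ioo (-(L : ℤ)) L) (f := fun m => ‖S m‖)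
    have h3 : ∑ m ∈ Finset.Ioo (-(L : ℤ)) L, ‖S m‖ ^ 2 ≤
        2 * L * (12 * (L : ℝ) ^ 2 * ℓ / d) + 4 * (L : ℝ) ^ 2 := by
      refine (Finset.sum_le_sum fun m _ => norm_sq_column_le t x y L d hL hd hdL ht m).trans ?_
      rw [Finset.sum_add_distrib, Finset.sum_ite_eq', Finset.sum_const, nsmul_eq_mul]
      gcongr
      split_ifs
      · exact le_rfl
      · positivity
    have h4 : 2 * L * (12 * (L : ℝ) ^ 2 * ℓ / d) + 4 * (L : ℝ) ^ 2 ≤ 28 * (L : ℝ) ^ 3 * ℓ / d := by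
      have e1 : 4 * (L : ℝ) ^ 2 ≤ 4 * (L : ℝ) ^ 3 * ℓ / d := by
        rw [le_div_iff₀ (by linarith)]
        calc 4 * (L : ℝ) ^ 2 * d ≤ 4 * (L : ℝ) ^ 2 * L := by gcongr
          _ = 4 * (L : ℝ) ^ 3 * 1 := by ring
          _ ≤ _ := by gcongr
      have e2 : 28 * (L : ℝ) ^ 3 * ℓ / d =
        2 * L * (12 * (L : ℝ) ^ 2 * ℓ / d) + 4 * (L : ℝ) ^ 3 * ℓ / d := by ring
      linarith
    calc _ ≤ _ := h1
      _ ≤ _ := h2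
      _ ≤ 2 * L * (28 * (L : ℝ) ^ 3 * ℓ / d) := by
          gcongr
          exact h3.trans h4
      _ = 56 * (L : ℝ) ^ 4 * ℓ * (1 / d) := by ring
      _ ≤ 56 * (L : ℝ) ^ 4 * ℓ * (2 / ((d + 1 : ℕ) : ℝ)) := by
          gcongr 56 * (L : ℝ) ^ 4 * ℓ * ?_
          push_cast
          rw [div_le_div_iff₀] <;> linarith
      _ = _ := by rw [div_eq_mul_inv]; ring

/-! ### The sampled flow -/

/-- The conjugated plane wave at the space-time point `(t, x, y)`, restricted to the frequencies
in the box; pairing it with a coefficient vector evaluates the linear flow at that point. -/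
def waveVec (L : ℕ) (t x y : ℝ) : EuclideanSpace ℂ (freqBox L) :=
  WithLp.toLp 2 fun mn => (starRingEnd ℂ) (Complex.exp (Complex.I * (phase t x y mn : ℂ)))

lemma inner_waveVec_waveVec (L : ℕ) (t x y t' x' y' : ℝ) :
    inner ℂ (waveVec L t x y) (waveVec L t' x' y') =
      ∑ mn ∈ freqBox L, Complex.exp (Complex.I * (phase (t - t') (x - x') (y - y') mn : ℂ)) := by
  rw [PiLp.inner_apply, ← Finset.sum_coe_sort (freqBox L)]
  refine Finset.sum_congr rfl fun mn _ => ?_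
  simp only [waveVec, RCLike.inner_apply, Complex.conj_conj]
  rw [← Complex.exp_conj, ← Complex.exp_add]
  congr 1
  simp only [phase, map_mul, Complex.conj_I, Complex.conj_ofReal]
  push_cast
  ring

lemma inner_waveVec (L : ℕ) (t x y : ℝ) (a : CoefSeq) :
    inner ℂ (waveVec L t x y) (WithLp.toLp 2 fun mn : freqBox L => a mn) =
      ∑ mn ∈ freqBox L, a mn * Complex.exp (Complex.I * (phase t x y mn : ℂ)) := by
  rw [PiLp.inner_apply, ← Finset.sum_coe_sort (freqBox L)]
  refine Finset.sum_congr rfl fun mn _ => ?_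
  simp only [waveVec, RCLike.inner_apply, Complex.conj_conj]

lemma sum_kernel_le (t₀ : ℝ) (p : ℕ → ℝ × ℝ) (L : ℕ) (hL : 1 ≤ L) :
    ∑ j ∈ Finset.range L, ∑ k ∈ Finset.range L,
      ‖inner ℂ (waveVec L (t₀ + j / (L : ℝ) ^ 2) (p j).1 (p j).2)
        (waveVec L (t₀ + k / (L : ℝ) ^ 2) (p k).1 (p k).2)‖ ^ 2 ≤
      224 * (L : ℝ) ^ 5 * (1 + Real.log (2 * L)) ^ 2 := by
  have hL' : (1 : ℝ) ≤ L := by exact_mod_cast hL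
  have hlog : 0 ≤ Real.log (2 * L) := Real.log_nonneg (by linarith)
  set ℓ := 1 + Real.log (2 * L) with hℓ
  have hharm : ∑ d ∈ Finset.range L, ((d + 1 : ℕ) : ℝ)⁻¹ ≤ ℓ := by
    have h1 := harmonic_le_one_add_log L
    have h2 : ((harmonic L : ℚ) : ℝ) = ∑ h ∈ Finset.range L, ((h + 1 : ℕ) : ℝ)⁻¹ := by
      simp [harmonic]
    rw [← h2, hℓ]
    refine h1.trans ?_
    gcongr
    linarith
  have hj : ∀ j ∈ Finset.range L, ∑ k ∈ Finset.range L,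
      ‖inner ℂ (waveVec L (t₀ + j / (L : ℝ) ^ 2) (p j).1 (p j).2)
        (waveVec L (t₀ + k / (L : ℝ) ^ 2) (p k).1 (p k).2)‖ ^ 2 ≤
      224 * (L : ℝ) ^ 4 * ℓ ^ 2 := by
    intro j hj
    have hjL := Finset.mem_range.mp hj
    calc _ ≤ ∑ k ∈ Finset.range L,
          112 * (L : ℝ) ^ 4 * ℓ * ((((j - k) + (k - j)) + 1 : ℕ) : ℝ)⁻¹ := by
          refine Finset.sum_le_sum fun k hk => ?_
          have hkL := Finset.mem_range.mp hk
          rw [inner_waveVec_waveVec]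
          refine norm_sq_kernel_le _ _ _ L _ hL (by omega) ?_
          have : t₀ + j / (L : ℝ) ^ 2 - (t₀ + k / (L : ℝ) ^ 2) = ((j : ℝ) - k) / (L : ℝ) ^ 2 := by
            ring
          rw [this, abs_div, abs_of_pos (show (0 : ℝ) < (L : ℝ) ^ 2 by positivity)]
          congr 1
          rcases le_total j k with h | h
          · rw [abs_of_nonpos (by simpa using h), Nat.sub_eq_zero_of_le h, zero_add,
              Nat.cast_sub h]
            ring
          · rw [abs_of_nonneg (by simpa using h), Nat.sub_eq_zero_of_le h, add_zero,
              Nat.cast_sub h]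
      _ ≤ 112 * (L : ℝ) ^ 4 * ℓ * (2 * ℓ) := by
          rw [← Finset.mul_sum]
          gcongr
          refine (sum_range_symm_le (fun d => ((d + 1 : ℕ) : ℝ)⁻¹) (fun _ => by positivity)
            L j hjL).trans ?_
          gcongr
      _ = _ := by ring
  refine (Finset.sum_le_sum hj).trans ?_
  rw [Finset.sum_const, Finset.card_range, nsmul_eq_mul]
  apply le_of_eq; ring

/-- Estimate for the flow sampled at `L` times with spacing `L⁻²` and arbitrary positions `p j`. -/
lemma sum_flow_sq_le (t₀ : ℝ) (p : ℕ → ℝ × ℝ) (L : ℕ) (hL : 1 ≤ L) (a : CoefSeq) :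
    ∑ j ∈ Finset.range L, ‖∑ mn ∈ freqBox L, a mn *
        Complex.exp (Complex.I * (phase (t₀ + j / (L : ℝ) ^ 2) (p j).1 (p j).2 mn : ℂ))‖ ^ 2 ≤
      (∑ mn ∈ freqBox L, ‖a mn‖ ^ 2) *
        (15 * (L : ℝ) ^ 2 * Real.sqrt L * (1 + Real.log (2 * L))) := by
  have hL' : (1 : ℝ) ≤ L := by exact_mod_cast hL
  have hlog : 0 ≤ Real.log (2 * L) := Real.log_nonneg (by linarith)
  have h := sum_norm_inner_sq_le (Finset.range L)
    (fun j => waveVec L (t₀ + j / (L : ℝ) ^ 2) (p j).1 (p j).2)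
    (WithLp.toLp 2 fun mn : freqBox L => a mn)
  simp only [inner_waveVec] at h
  have e : ‖(WithLp.toLp 2 fun mn : freqBox L => a mn : EuclideanSpace ℂ (freqBox L))‖ ^ 2 =
      ∑ mn ∈ freqBox L, ‖a mn‖ ^ 2 := by
    rw [EuclideanSpace.norm_sq_eq, ← Finset.sum_coe_sort (freqBox L)]
  rw [e] at h
  refine h.trans ?_
  gcongr
  rw [Real.sqrt_le_left (by positivity)]
  refine (sum_kernel_le t₀ p L hL).trans ?_
  rw [mul_pow, mul_pow, Real.sq_sqrt (by positivity)]
  have : 0 ≤ (L : ℝ) ^ 5 * (1 + Real.log (2 * L)) ^ 2 := by positivity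
  nlinarith

/-! ### Time integration -/

/-- For frequency-localised data the series defining the flow is a finite sum. -/
lemma toFun_Wgrp (L : ℕ) (a : CoefSeq) (ha : ∀ mn ∉ freqBox L, a mn = 0) (t x y : ℝ) :
    toFun (Wgrp t a) x y =
      ∑ mn ∈ freqBox L, a mn * Complex.exp (Complex.I * (phase t x y mn : ℂ)) := by
  rw [toFun, tsum_eq_sum (s := freqBox L)]
  · refine Finset.sum_congr rfl fun mn _ => ?_
    rw [Wgrp, mul_comm (Complex.exp _) (a mn), mul_assoc, ← Complex.exp_add]
    congr 2
    simp only [phase]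
    push_cast
    ring
  · intro mn hmn
    simp [Wgrp, ha mn hmn]

lemma sum_supNorm_sq_le (t₀ : ℝ) (L : ℕ) (hL : 1 ≤ L) (a : CoefSeq)
    (ha : ∀ mn ∉ freqBox L, a mn = 0) :
    ∑ j ∈ Finset.range L, supNorm (Wgrp (t₀ + j / (L : ℝ) ^ 2) a) ^ 2 ≤
      (∑ mn ∈ freqBox L, ‖a mn‖ ^ 2) *
        (60 * (L : ℝ) ^ 2 * Real.sqrt L * (1 + Real.log (2 * L))) := by
  -- The supremum need not be attained; a point realising half of it is enough.
  have hex : ∀ j : ℕ, ∃ p : ℝ × ℝ, supNorm (Wgrp (t₀ + j / (L : ℝ) ^ 2) a) ≤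
      2 * ‖toFun (Wgrp (t₀ + j / (L : ℝ) ^ 2) a) p.1 p.2‖ := by
    intro j
    by_contra! hcon
    set s := supNorm (Wgrp (t₀ + j / (L : ℝ) ^ 2) a) with hs
    have hpos : 0 < s := lt_of_le_of_lt (by positivity) (hcon (0, 0))
    have : s ≤ s / 2 := by
      conv_lhs => rw [hs, supNorm]
      exact ciSup_le fun p => by linarith [hcon p]
    linarith
  have hnn : ∀ b : CoefSeq, 0 ≤ supNorm b := fun b => Real.iSup_nonneg fun _ => norm_nonneg _
  choose p hp using hex
  have h := sum_flow_sq_le t₀ p L hL a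
  simp only [← toFun_Wgrp L a ha] at h
  calc _ ≤ ∑ j ∈ Finset.range L,
        4 * ‖toFun (Wgrp (t₀ + j / (L : ℝ) ^ 2) a) (p j).1 (p j).2‖ ^ 2 := by
        refine Finset.sum_le_sum fun j _ => ?_
        refine (pow_le_pow_left₀ (hnn _) (hp j) 2).trans (le_of_eq ?_)
        ring
    _ ≤ _ := by
        rw [← Finset.mul_sum]
        linarith

/-- Integrating over translates of an arithmetic progression of times: no regularity of `g`
is needed, a non-integrable `g` having Bochner integral zero. -/
lemma setIntegral_le_of_sum_le (g : ℝ → ℝ) (hg : ∀ t, 0 ≤ g t) (B δ : ℝ) (hB : 0 ≤ B) (hδ : 0 ≤ δ)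
    (M : ℕ) (t₁ t₂ : ℝ) (h12 : t₂ - t₁ ≤ M * δ)
    (h : ∀ t₀, ∑ j ∈ Finset.range M, g (t₀ + j * δ) ≤ B) :
    ∫ t in Set.Icc t₁ t₂, g t ≤ δ * B := by
  by_cases hint : IntegrableOn g (Set.Icc t₁ t₂)
  swap
  · rw [integral_undef hint]; positivity
  -- Beyond `t₂` nothing is known about integrability of `g`, hence the truncation.
  set G := (Set.Icc t₁ t₂).indicator g with hG
  have hGi : Integrable G := hint.integrable_indicator measurableSet_Icc
  have hGg : ∀ t, G t ≤ g t := fun t => Set.indicator_le_self' (fun _ _ => hg _) t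
  have h1 : ∫ t in Set.Icc t₁ t₂, g t = ∫ t in t₁..(t₁ + M * δ), G t := by
    rw [intervalIntegral.integral_of_le (by nlinarith [show (0 : ℝ) ≤ M * δ by positivity]),
      ← integral_Icc_eq_integral_Ioc, hG, setIntegral_indicator measurableSet_Icc]
    congr 2
    exact (Set.inter_eq_right.mpr (Set.Icc_subset_Icc_right (by linarith))).symm
  have h2 : ∫ t in t₁..(t₁ + M * δ), G t =
      ∑ j ∈ Finset.range M, ∫ t in (t₁ + j * δ)..(t₁ + (j + 1 : ℕ) * δ), G t := by
    rw [intervalIntegral.sum_integral_adjacent_intervals (a := fun j : ℕ => t₁ + j * δ)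
      (fun k _ => hGi.intervalIntegrable)]
    simp
  have h3 : ∀ j : ℕ, ∫ t in (t₁ + j * δ)..(t₁ + (j + 1 : ℕ) * δ), G t =
      ∫ s in (0 : ℝ)..δ, G (s + (t₁ + j * δ)) := by
    intro j
    rw [intervalIntegral.integral_comp_add_right]
    congr 1
    · ring
    · push_cast; ring
  have hii : ∀ j : ℕ, IntervalIntegrable (fun s => G (s + (t₁ + j * δ))) volume 0 δ :=
    fun j => (hGi.comp_add_right _).intervalIntegrable
  rw [h1, h2]
  simp only [h3]
  rw [← intervalIntegral.integral_finsetSum (fun j _ => hii j)]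
  calc _ ≤ ∫ s in (0 : ℝ)..δ, B := by
        refine intervalIntegral.integral_mono_on hδ ?_ intervalIntegrable_const fun s _ => ?_
        · simpa only [Finset.sum_fn] using
            IntervalIntegrable.sum (Finset.range M) (fun j _ => hii j)
        · refine le_trans (Finset.sum_le_sum fun j _ => hGg _) ?_
          refine le_trans (le_of_eq ?_) (h (s + t₁))
          exact Finset.sum_congr rfl fun j _ => by rw [add_assoc]
    _ = _ := by simp

/-- The Strichartz estimate for data supported in a frequency box, with loss `√L (1 + log 2L)` for
the squared norms. -/
lemma strichartz_box (L : ℕ) (hL : 1 ≤ L) (a : CoefSeq) (ha : ∀ mn ∉ freqBox L, a mn = 0)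
    (t₁ t₂ : ℝ) (h12 : t₂ - t₁ ≤ (L : ℝ)⁻¹) :
    ∫ t in Set.Icc t₁ t₂, supNorm (Wgrp t a) ^ 2 ≤
      60 * Real.sqrt L * (1 + Real.log (2 * L)) * l2NormSq a := by
  have hL' : (1 : ℝ) ≤ L := by exact_mod_cast hL
  have hlog : 0 ≤ Real.log (2 * L) := Real.log_nonneg (by linarith)
  have hl2 : l2NormSq a = ∑ mn ∈ freqBox L, ‖a mn‖ ^ 2 :=
    tsum_eq_sum fun mn hmn => by simp [ha mn hmn]
  have h := setIntegral_le_of_sum_le (fun t => supNorm (Wgrp t a) ^ 2) (fun _ => sq_nonneg _)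
    ((∑ mn ∈ freqBox L, ‖a mn‖ ^ 2) * (60 * (L : ℝ) ^ 2 * Real.sqrt L * (1 + Real.log (2 * L))))
    (1 / (L : ℝ) ^ 2) (by positivity) (by positivity) L t₁ t₂
    (h12.trans (le_of_eq (by field_simp)))
    (fun t₀ => by simpa only [mul_one_div] using sum_supNorm_sq_le t₀ L hL a ha)
  refine h.trans (le_of_eq ?_)
  rw [hl2]
  field_simp

/-- The block selected by `Ptilde N` lies in the box of side `max 1 N`. -/
lemma Ptilde_eq_zero (N : ℕ) (a : CoefSeq) (mn : ℤ × ℤ) (h : mn ∉ freqBox (max 1 N)) :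
    Ptilde N a mn = 0 := by
  refine Set.indicator_of_notMem (fun hmem => h ?_) a
  simp only [freqBox, Finset.mem_product, Finset.mem_Ioo]
  unfold blockSet at hmem
  split_ifs at hmem with hN
  · obtain ⟨h1, h2⟩ := hmem
    subst hN
    simp [h1, h2]
  · obtain ⟨k, hk, hmem⟩ := hmem
    have hmax : ((max 1 N : ℕ) : ℤ) = 2 ^ k := by
      rw [max_eq_right (Nat.one_le_iff_ne_zero.mpr hN), hk]; push_cast; rfl
    have hQ : ∀ n ∈ QSet k, |n| < (2 : ℤ) ^ k := by
      intro n hn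
      unfold QSet at hn
      split_ifs at hn with h0
      · simp only [Set.mem_singleton_iff] at hn
        simp [hn]
      · exact hn.2
    rw [hmax, ← abs_lt, ← abs_lt]
    rcases hmem with ⟨h1, h2⟩ | ⟨_, h1, h2⟩
    · exact ⟨h1, hQ _ h2⟩
    · exact ⟨hQ _ h2, h1.trans_le (pow_le_pow_right₀ (by norm_num) (Nat.sub_le _ _))⟩

/-- **Lemma 3.1, estimate (3.2).** Localized Strichartz estimate: for `α > 1/4`,
`N ∈ P` and any time interval `I` of length `≤ (1 ∨ N)⁻¹`,
`‖W(·)P̃_N u₀‖_{L²(I;L^∞(𝕋²))} ≤ C_α (1 ∨ N)^α ‖P̃_N u₀‖_{L²(𝕋²)}`. -/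
theorem localized_strichartz (α : ℝ) (hα : 1/4 < α) :
    ∃ C > (0:ℝ), ∀ N : ℕ, inP N →
      ∀ a : CoefSeq, Summable (fun mn : ℤ × ℤ => ‖a mn‖ ^ 2) →
        ∀ t₁ t₂ : ℝ, t₂ - t₁ ≤ ((1 : ℝ) ⊔ (N : ℝ))⁻¹ →
          Real.sqrt (∫ t in Set.Icc t₁ t₂, supNorm (Wgrp t (Ptilde N a)) ^ 2) ≤
            C * ((1 : ℝ) ⊔ (N : ℝ)) ^ α * l2Norm (Ptilde N a) := by
  -- Squared norms lose `√L (1 + log 2L)`, so `L ^ (2α - 1/2)` is left to absorb the logarithm.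
  set ε := 2 * α - 1 / 2 with hε
  have hεpos : 0 < ε := by linarith
  set D : ℝ := 60 * (2 + 1 / ε) with hD
  have hDpos : 0 < D := by positivity
  refine ⟨Real.sqrt D, Real.sqrt_pos.mpr hDpos, fun N _ a _ t₁ t₂ h12 => ?_⟩
  have hcast : ((1 : ℝ) ⊔ (N : ℝ)) = ((max 1 N : ℕ) : ℝ) := by push_cast; rfl
  rw [hcast] at h12 ⊢
  set L := max 1 N with hLdef
  have hL : 1 ≤ L := le_max_left _ _
  have hL' : (1 : ℝ) ≤ L := by exact_mod_cast hL
  have hLpos : (0 : ℝ) < L := by linarith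
  have hmain := strichartz_box L hL (Ptilde N a) (fun mn h => Ptilde_eq_zero N a mn h) t₁ t₂ h12
  have hl2 : 0 ≤ l2NormSq (Ptilde N a) := tsum_nonneg fun _ => sq_nonneg _
  have hlog : 1 + Real.log (2 * L) ≤ (2 + 1 / ε) * (L : ℝ) ^ ε := by
    rw [Real.log_mul (by norm_num) hLpos.ne']
    have h1 := Real.log_le_rpow_div hLpos.le hεpos
    have h2 : (1 : ℝ) ≤ (L : ℝ) ^ ε := Real.one_le_rpow hL' hεpos.le
    have h3 : Real.log 2 ≤ 1 := by linarith [Real.log_two_lt_d9]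
    have h4 : (2 + 1 / ε) * (L : ℝ) ^ ε = 2 * (L : ℝ) ^ ε + (L : ℝ) ^ ε / ε := by ring
    linarith
  have hpow : Real.sqrt L * (L : ℝ) ^ ε = ((L : ℝ) ^ α) ^ 2 := by
    rw [Real.sqrt_eq_rpow, ← Real.rpow_add hLpos, ← Real.rpow_natCast, ← Real.rpow_mul hLpos.le]
    congr 1
    rw [hε]; push_cast; ring
  have hfin : ∫ t in Set.Icc t₁ t₂, supNorm (Wgrp t (Ptilde N a)) ^ 2 ≤
      D * ((L : ℝ) ^ α) ^ 2 * l2NormSq (Ptilde N a) := by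
    refine hmain.trans ?_
    refine mul_le_mul_of_nonneg_right ?_ hl2
    rw [← hpow, hD]
    calc 60 * Real.sqrt L * (1 + Real.log (2 * L))
        ≤ 60 * Real.sqrt L * ((2 + 1 / ε) * (L : ℝ) ^ ε) := by gcongr
      _ = _ := by ring
  refine (Real.sqrt_le_sqrt hfin).trans (le_of_eq ?_)
  rw [Real.sqrt_mul (by positivity), Real.sqrt_mul hDpos.le, Real.sqrt_sq (by positivity), l2Norm]
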